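/- Let n be a natural number and let R be a transitive binary relation on the set of vectors (Fin n → ℕ) of natural numbers. Suppose R is covered by a finite family of relations R_1, …, R_m (i.e., R ⊆ R_1 ∪ … ∪ R_m), and for each j ∈ {1,…,m} there exist nonnegative rational coefficients a^j : Fin n → ℚ such that whenever R_j relates y to x, Σ_i a^j_i·y_i < Σ_i a^j_i·x_i. Then there is no infinite sequence x₀, x₁, x₂, … with R xₖ₊₁ xₖ for all k; equivalently, R is well-founded. -/

import Mathlib

/-- If a transitive relation `R` on natural-number size vectors is covered by
finitely many relations `R_1, …, R_m`, each of which strictly decreases some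
fixed nonnegative rational linear combination of the sizes, then there is no
infinite `R`-descending sequence; equivalently, `R` is well-founded. -/
theorem covered_linear_rankings_wellFounded
    (n m : ℕ) (R : (Fin n → ℕ) → (Fin n → ℕ) → Prop)
    (htrans : Transitive R)
    (Rj : Fin m → (Fin n → ℕ) → (Fin n → ℕ) → Prop)
    (hcover : ∀ y x : Fin n → ℕ, R y x → ∃ j : Fin m, Rj j y x)
    (a : Fin m → Fin n → ℚ) (ha : ∀ j i, 0 ≤ a j i)
    (hdec : ∀ j : Fin m, ∀ x y : Fin n → ℕ, Rj j y x →
      (∑ i, a j i * (y i : ℚ)) < ∑ i, a j i * (x i : ℚ)) :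
    (¬ ∃ x : ℕ → (Fin n → ℕ), ∀ k, R (x (k + 1)) (x k)) ∧ WellFounded R := by
  have key : ¬ ∃ x : ℕ → (Fin n → ℕ), ∀ k, R (x (k + 1)) (x k) := by
    rintro ⟨x, hx⟩
    have hR : ∀ p d : ℕ, R (x (p + d + 1)) (x p) := by
      intro p d
      induction d with
      | zero => exact hx p
      | succ d ih => exact htrans (hx (p + d + 1)) ih
    obtain ⟨p, q, hpq, hle⟩ := wellQuasiOrdered_le (α := Fin n → ℕ) x
    obtain ⟨d, rfl⟩ := Nat.exists_eq_add_of_lt hpq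
    obtain ⟨j, hj⟩ := hcover _ _ (hR p d)
    refine absurd (hdec j _ _ hj) (not_lt.mpr ?_)
    refine Finset.sum_le_sum fun i _ => mul_le_mul_of_nonneg_left ?_ (ha j i)
    exact_mod_cast hle i
  refine ⟨key, ?_⟩
  rw [wellFounded_iff_isEmpty_descending_chain]
  exact ⟨fun f => key ⟨f.1, f.2⟩⟩
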